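/- Let A = {A_i}_{1 ≤ i ≤ n+1} be a polygon in ℝ^N with side lengths ℓ_i. Then λ_1^A equals the minimum of Q(α, β)/(∑_{i=1}^n α_i²) over all (α, β) ∈ E with (α, β) ≠ 0 and ∑_{i=1}^n α_i = 0; that is, the variational first eigenvalue λ_1^A coincides with the first nonzero eigenvalue of the finite-dimensional quadratic form Q on E. -/

import Mathlib

open MeasureTheory
open scoped RealInnerProductSpace ENNReal NNReal

noncomputable section

/-- The length of the `i`-th side of the polygon with vertices `A` (indices cyclic). -/
def polyLen {N n : ℕ} (A : ZMod n → EuclideanSpace ℝ (Fin N)) (i : ZMod n) : ℝ :=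
  ‖A (i + 1) - A i‖

/-- The unit tangent vector of the `i`-th side of the polygon with vertices `A`. -/
def polyTau {N n : ℕ} (A : ZMod n → EuclideanSpace ℝ (Fin N)) (i : ZMod n) :
    EuclideanSpace ℝ (Fin N) :=
  ‖A (i + 1) - A i‖⁻¹ • (A (i + 1) - A i)

/-- The curvature vector of the polygon with vertices `A` at the vertex `A i`. -/
def polyH {N n : ℕ} (A : ZMod n → EuclideanSpace ℝ (Fin N)) (i : ZMod n) :
    EuclideanSpace ℝ (Fin N) :=
  ‖A i - A (i - 1)‖⁻¹ • (A i - A (i - 1)) + ‖A i - A (i + 1)‖⁻¹ • (A i - A (i + 1))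

/-- `A` (a cyclic list of vertices) is a polygon: there are at least 3 vertices, consecutive
vertices are distinct, open sides do not meet each other, and a vertex belongs only to its
two consecutive (closed) sides. -/
def IsPolygon {N n : ℕ} [NeZero n] (A : ZMod n → EuclideanSpace ℝ (Fin N)) : Prop :=
  3 ≤ n ∧
  (∀ i, A (i + 1) ≠ A i) ∧
  (∀ i j : ZMod n, i ≠ j →
    openSegment ℝ (A i) (A (i + 1)) ∩ openSegment ℝ (A j) (A (j + 1)) = ∅) ∧
  (∀ i j : ZMod n, A i ∈ segment ℝ (A j) (A (j + 1)) → j = i ∨ j = i - 1)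

/-- The first nonzero "eigenvalue" `λ₁ᴬ` of the polygon with vertices `A`, defined as the
infimum of the Rayleigh quotients
`(∑ i, ∫_{[Aᵢ, Aᵢ₊₁]} |∇_P u|² dℋ¹) / (∑ i, u (Aᵢ)²)` over smooth functions `u : ℝᴺ → ℝ`
with `∑ i, u (Aᵢ) = 0` and `∑ i, u (Aᵢ)² ≠ 0`, where `∇_P u (x) = ⟪∇u(x), τᵢ⟫ τᵢ` is the
tangential gradient of `u` along the side `[Aᵢ, Aᵢ₊₁]`. -/
def polyLambda1 {N n : ℕ} [NeZero n] (A : ZMod n → EuclideanSpace ℝ (Fin N)) : ℝ :=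
  sInf { r : ℝ | ∃ u : EuclideanSpace ℝ (Fin N) → ℝ, ContDiff ℝ (⊤ : ℕ∞) u ∧
    (∑ i, u (A i)) = 0 ∧ (∑ i, u (A i) ^ 2) ≠ 0 ∧
    r = (∑ i, ∫ x in segment ℝ (A i) (A (i + 1)),
          ‖(fderiv ℝ u x (polyTau A i)) • polyTau A i‖ ^ 2 ∂(μH[1])) /
        (∑ i, u (A i) ^ 2) }


lemma restrict_segment_eq {N : ℕ} (a b : EuclideanSpace ℝ (Fin N)) :
    (μH[1] : Measure (EuclideanSpace ℝ (Fin N))).restrict (segment ℝ a b) =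
      (nndist a b) • Measure.map (AffineMap.lineMap a b : ℝ → EuclideanSpace ℝ (Fin N))
        (volume.restrict (Set.Icc (0:ℝ) 1)) := by
  have hc : Continuous (AffineMap.lineMap a b : ℝ → EuclideanSpace ℝ (Fin N)) :=
    AffineMap.lineMap_continuous
  ext s hs
  rw [Measure.restrict_apply hs, Measure.smul_apply, Measure.map_apply hc.measurable hs,
    Measure.restrict_apply (hc.measurable hs), segment_eq_image_lineMap, Set.inter_comm,
    ← Set.image_inter_preimage, hausdorffMeasure_lineMap_image, hausdorffMeasure_real,
    Set.inter_comm]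

lemma integral_segment_eq {N : ℕ} (a b : EuclideanSpace ℝ (Fin N))
    (f : EuclideanSpace ℝ (Fin N) → ℝ) (hf : Continuous f) :
    ∫ x in segment ℝ a b, f x ∂(μH[1]) =
      ‖b - a‖ * ∫ s in (0:ℝ)..1, f (AffineMap.lineMap a b s) := by
  have hc : Continuous (AffineMap.lineMap a b : ℝ → EuclideanSpace ℝ (Fin N)) :=
    AffineMap.lineMap_continuous
  rw [restrict_segment_eq, integral_smul_nnreal_measure,
    integral_map hc.aemeasurable hf.aestronglyMeasurable,
    intervalIntegral.integral_of_le zero_le_one, integral_Icc_eq_integral_Ioc,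
    NNReal.smul_def, smul_eq_mul, coe_nndist, dist_eq_norm, norm_sub_rev]

lemma sq_integral_le (g : ℝ → ℝ) (hg : Continuous g) :
    (∫ s in (0:ℝ)..1, g s) ^ 2 ≤ ∫ s in (0:ℝ)..1, g s ^ 2 := by
  set m := ∫ s in (0:ℝ)..1, g s with hm
  have h1 : 0 ≤ ∫ s in (0:ℝ)..1, (g s - m) ^ 2 :=
    intervalIntegral.integral_nonneg zero_le_one fun _ _ => sq_nonneg _
  have h2 : ∫ s in (0:ℝ)..1, (g s - m) ^ 2 =
      (∫ s in (0:ℝ)..1, g s ^ 2) - 2 * m * m + m ^ 2 := by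
    have : ∀ s, (g s - m) ^ 2 = (g s ^ 2 - 2 * m * g s) + m ^ 2 := fun s => by ring
    simp_rw [this]
    rw [intervalIntegral.integral_add, intervalIntegral.integral_sub,
      intervalIntegral.integral_const_mul, ← hm]
    · simp
    all_goals exact Continuous.intervalIntegrable (by fun_prop) _ _
  nlinarith

lemma exists_cutoff (ε : ℝ) (hε : 0 < ε) : ∃ φ : ℝ → ℝ, ∃ δ : ℝ, ContDiff ℝ (⊤ : ℕ∞) φ ∧ 0 < δ ∧
    δ < 1 ∧
    (∀ t ≤ δ, φ t = 0) ∧ (∀ t, 1 - δ ≤ t → φ t = 1) ∧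
    ∫ s in (0:ℝ)..1, (deriv φ s) ^ 2 ≤ 1 + ε := by
  obtain ⟨δ, hδ0, hδ1, hδ⟩ : ∃ δ : ℝ, 0 < δ ∧ δ < 1/8 ∧ 1 / (1 - 4 * δ) ≤ 1 + ε := by
    refine ⟨min (1/16) (ε / (8 * (1 + ε))), by positivity, ?_, ?_⟩
    · exact (min_le_left _ _).trans_lt (by norm_num)
    · have h1 := min_le_left (1/16 : ℝ) (ε / (8 * (1 + ε)))
      have h2 := min_le_right (1/16 : ℝ) (ε / (8 * (1 + ε)))
      set δ := min (1/16 : ℝ) (ε / (8 * (1 + ε)))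
      rw [le_div_iff₀ (by positivity)] at h2
      rw [div_le_iff₀ (by linarith)]
      nlinarith
  let b : ContDiffBump (1/2 : ℝ) := ⟨1/2 - 2 * δ, 1/2 - δ, by linarith, by linarith⟩
  set ψ : ℝ → ℝ := b.normed volume with hψ
  have hψc : Continuous ψ := b.continuous_normed
  have hψs : ContDiff ℝ (⊤ : ℕ∞) ψ := b.contDiff_normed
  have hψi : Integrable ψ := b.integrable_normed
  have hψ0 : ∀ x, x ∉ Set.Ioo δ (1 - δ) → ψ x = 0 := by
    intro x hx
    have : x ∉ Function.support ψ := by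
      rw [hψ, b.support_normed_eq, Real.ball_eq_Ioo]
      intro h
      apply hx
      have : b.rOut = 1/2 - δ := rfl
      rw [this] at h
      exact ⟨by linarith [h.1], by linarith [h.2]⟩
    simpa using this
  have htot : ∀ t, 1 - δ ≤ t → ∫ s in δ..t, ψ s = 1 := by
    intro t ht
    rw [intervalIntegral.integral_of_le (by linarith), setIntegral_eq_integral_of_forall_compl_eq_zero]
    · exact b.integral_normed
    · intro x hx
      apply hψ0
      intro h
      exact hx ⟨h.1, by linarith [h.2]⟩
  have hder : ∀ t, HasDerivAt (fun t => ∫ s in δ..t, ψ s) (ψ t) t := fun t =>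
    intervalIntegral.integral_hasDerivAt_right (hψc.intervalIntegrable _ _)
      (hψc.stronglyMeasurableAtFilter _ _) hψc.continuousAt
  have hderiv : deriv (fun t => ∫ s in δ..t, ψ s) = ψ := funext fun t => (hder t).deriv
  refine ⟨fun t => ∫ s in δ..t, ψ s, δ, ?_, hδ0, by linarith, ?_, htot, ?_⟩
  · rw [contDiff_infty_iff_deriv, hderiv]
    exact ⟨fun t => (hder t).differentiableAt, hψs⟩
  · intro t ht
    dsimp only
    rw [intervalIntegral.integral_symm, intervalIntegral.integral_of_le ht,
      setIntegral_eq_zero_of_forall_eq_zero, neg_zero]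
    intro x hx
    apply hψ0
    intro h
    exact absurd h.1 (not_lt.2 hx.2)
  · rw [hderiv]
    refine le_trans ?_ hδ
    have hb : ∀ x, ψ x ≤ 1 / (1 - 4 * δ) := by
      intro x
      have := b.normed_le_div_measure_closedBall_rIn volume x
      have h2 : b.rIn = 1/2 - 2 * δ := rfl
      rw [h2, Real.volume_real_closedBall (by linarith)] at this
      convert this using 2
      ring
    have hn : ∀ x, 0 ≤ ψ x := b.nonneg_normed
    calc ∫ s in (0:ℝ)..1, ψ s ^ 2 ≤ ∫ s in (0:ℝ)..1, (1 / (1 - 4 * δ)) * ψ s := by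
          apply intervalIntegral.integral_mono_on zero_le_one
          · exact (hψc.pow 2).intervalIntegrable _ _
          · exact (hψc.const_mul _).intervalIntegrable _ _
          · intro x _
            rw [sq]
            exact mul_le_mul_of_nonneg_right (hb x) (hn x)
      _ = 1 / (1 - 4 * δ) * ∫ s in (0:ℝ)..1, ψ s := by
          rw [intervalIntegral.integral_const_mul]
      _ = 1 / (1 - 4 * δ) := by
          rw [intervalIntegral.integral_of_le zero_le_one,
            setIntegral_eq_integral_of_forall_compl_eq_zero, b.integral_normed, mul_one]
          intro x hx
          apply hψ0
          intro h
          exact hx ⟨by linarith [h.1], by linarith [h.2]⟩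


lemma side_energy {N n : ℕ} [NeZero n] (A : ZMod n → EuclideanSpace ℝ (Fin N))
    (i : ZMod n) (hi : A (i + 1) ≠ A i)
    (u : EuclideanSpace ℝ (Fin N) → ℝ) (hu : ContDiff ℝ (⊤ : ℕ∞) u) :
    ∫ x in segment ℝ (A i) (A (i + 1)),
          ‖(fderiv ℝ u x (polyTau A i)) • polyTau A i‖ ^ 2 ∂(μH[1]) =
      (∫ s in (0:ℝ)..1, (deriv (fun s : ℝ => u (AffineMap.lineMap (A i) (A (i + 1)) s)) s) ^ 2)
        / polyLen A i := by
  have hl : 0 < ‖A (i + 1) - A i‖ := norm_pos_iff.2 (sub_ne_zero.2 hi)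
  have hfc : Continuous (fderiv ℝ u) := hu.continuous_fderiv (by simp)
  have hτ : ‖polyTau A i‖ = 1 := by
    rw [polyTau, norm_smul, norm_inv, norm_norm, inv_mul_cancel₀ hl.ne']
  rw [integral_segment_eq]
  swap
  · fun_prop
  have hd : ∀ s, deriv (fun s : ℝ => u (AffineMap.lineMap (A i) (A (i + 1)) s)) s =
      fderiv ℝ u (AffineMap.lineMap (A i) (A (i + 1)) s) (A (i + 1) - A i) := by
    intro s
    have h1 : HasDerivAt (AffineMap.lineMap (k := ℝ) (A i) (A (i + 1)) : ℝ → EuclideanSpace ℝ (Fin N))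
      (A (i + 1) - A i) s := AffineMap.hasDerivAt_lineMap
    exact (((hu.differentiable (by simp)) _).hasFDerivAt.comp_hasDerivAt s h1).deriv
  simp_rw [hd, norm_smul, hτ, mul_one, polyTau, map_smul, smul_eq_mul, norm_mul, mul_pow,
    Real.norm_eq_abs, sq_abs]
  rw [intervalIntegral.integral_const_mul, polyLen]
  field_simp

lemma side_energy_ge {N n : ℕ} [NeZero n] (A : ZMod n → EuclideanSpace ℝ (Fin N))
    (i : ZMod n) (hi : A (i + 1) ≠ A i)
    (u : EuclideanSpace ℝ (Fin N) → ℝ) (hu : ContDiff ℝ (⊤ : ℕ∞) u) :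
    (u (A (i + 1)) - u (A i)) ^ 2 / polyLen A i ≤ ∫ x in segment ℝ (A i) (A (i + 1)),
          ‖(fderiv ℝ u x (polyTau A i)) • polyTau A i‖ ^ 2 ∂(μH[1]) := by
  rw [side_energy A i hi u hu]
  have hs : ContDiff ℝ (⊤ : ℕ∞) (fun s : ℝ => u (AffineMap.lineMap (A i) (A (i + 1)) s)) := by
    simp only [AffineMap.lineMap_apply_module']
    apply hu.comp
    fun_prop
  have hdc := hs.continuous_deriv (by simp)
  apply div_le_div_of_nonneg_right _ (norm_nonneg _)
  have := sq_integral_le _ hdc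
  rw [intervalIntegral.integral_deriv_eq_sub
    (fun x _ => (hs.differentiable (by simp)) x) (hdc.intervalIntegrable _ _)] at this
  simpa using this

lemma IsPolygon.injective {N n : ℕ} [NeZero n] {A : ZMod n → EuclideanSpace ℝ (Fin N)}
    (hA : IsPolygon A) : Function.Injective A := by
  intro i j h
  obtain ⟨h3, hne, -, hv⟩ := hA
  rcases hv i j (h ▸ left_mem_segment _ _ _) with h' | h'
  · exact h'.symm
  · exfalso
    apply hne j
    rw [h'] at h ⊢
    simpa using h

lemma eventually_not_mem_image {N : ℕ} (a b x : EuclideanSpace ℝ (Fin N)) (c d : ℝ)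
    (hx : ∀ s ∈ Set.Icc c d, x ≠ AffineMap.lineMap a b s) :
    ∀ᶠ y in nhds x, ∀ s ∈ Set.Icc c d, y ≠ AffineMap.lineMap a b s := by
  have hc : Continuous (AffineMap.lineMap a b : ℝ → EuclideanSpace ℝ (Fin N)) :=
    AffineMap.lineMap_continuous
  have hcl : IsClosed ((AffineMap.lineMap a b : ℝ → EuclideanSpace ℝ (Fin N)) '' Set.Icc c d) :=
    (isCompact_Icc.image hc).isClosed
  have : x ∈ ((AffineMap.lineMap a b : ℝ → EuclideanSpace ℝ (Fin N)) '' Set.Icc c d)ᶜ := by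
    rintro ⟨s, hs, h⟩
    exact hx s hs h.symm
  filter_upwards [hcl.isOpen_compl.mem_nhds this] with y hy s hs h
  exact hy ⟨s, hs, h.symm⟩

open scoped Manifold ContDiff in
lemma exists_extension {N n : ℕ} [NeZero n] {A : ZMod n → EuclideanSpace ℝ (Fin N)}
    (hA : IsPolygon A) (α : ZMod n → ℝ) (φ : ℝ → ℝ) (δ : ℝ) (hφ : ContDiff ℝ (⊤ : ℕ∞) φ)
    (hδ : 0 < δ) (hδ1 : δ < 1) (h0 : ∀ t ≤ δ, φ t = 0) (h1 : ∀ t, 1 - δ ≤ t → φ t = 1) :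
    ∃ u : EuclideanSpace ℝ (Fin N) → ℝ, ContDiff ℝ (⊤ : ℕ∞) u ∧
      ∀ j, ∀ s ∈ Set.Icc (0:ℝ) 1, u (AffineMap.lineMap (A j) (A (j + 1)) s) =
        α j + (α (j + 1) - α j) * φ s := by
  have hinj := hA.injective
  obtain ⟨h3, hne, hop, hv⟩ := hA
  let T : EuclideanSpace ℝ (Fin N) → Set ℝ := fun x => {y | ∀ j, ∀ s ∈ Set.Icc (0:ℝ) 1,
    x = AffineMap.lineMap (A j) (A (j + 1)) s → y = α j + (α (j + 1) - α j) * φ s}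
  have hT : ∀ x, Convex ℝ (T x) := by
    intro x y hy z hz a b ha hb hab j s hs hx
    rw [hy j s hs hx, hz j s hs hx, ← add_smul, hab, one_smul]
  have hli : ∀ j, Function.Injective
      (AffineMap.lineMap (A j) (A (j + 1)) : ℝ → EuclideanSpace ℝ (Fin N)) :=
    fun j => AffineMap.lineMap_injective ℝ (hne j).symm
  have key : ∃ g : C^((⊤ : ℕ∞) : WithTop ℕ∞)⟮𝓘(ℝ, EuclideanSpace ℝ (Fin N)), EuclideanSpace ℝ (Fin N);
      𝓘(ℝ, ℝ), ℝ⟯, ∀ x, g x ∈ T x := by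
    apply exists_contMDiffMap_forall_mem_convex_of_local _ hT
    intro x
    suffices H : ∃ g : EuclideanSpace ℝ (Fin N) → ℝ, ContDiff ℝ (⊤ : ℕ∞) g ∧
        ∀ j, ∀ᶠ y in nhds x, ∀ s ∈ Set.Icc (0:ℝ) 1,
          y = AffineMap.lineMap (A j) (A (j + 1)) s → g y = α j + (α (j + 1) - α j) * φ s by
      obtain ⟨g, hg, hgj⟩ := H
      exact ⟨_, Filter.eventually_all.2 hgj, g, hg.contMDiff.contMDiffOn, fun y hy => hy⟩
    by_cases hxv : ∃ i, x = A i
    · obtain ⟨i, rfl⟩ := hxv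
      refine ⟨fun _ => α i, contDiff_const, fun j => ?_⟩
      by_cases hji : j = i
      · subst hji
        filter_upwards [eventually_not_mem_image (A j) (A (j + 1)) (A j) δ 1 (by
          intro s hs h
          have : (0:ℝ) = s := hli j (by simpa using h)
          linarith [hs.1])] with y hy s hs h
        have : s < δ := by
          by_contra hcon
          exact hy s ⟨not_lt.1 hcon, hs.2⟩ h
        rw [h0 s this.le]; ring
      by_cases hji' : j + 1 = i
      · subst hji'
        filter_upwards [eventually_not_mem_image (A j) (A (j + 1)) (A (j + 1)) 0 (1 - δ) (by
          intro s hs h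
          have : (1:ℝ) = s := hli j (by simpa using h)
          linarith [hs.2])] with y hy s hs h
        have : 1 - δ < s := by
          by_contra hcon
          exact hy s ⟨hs.1, not_lt.1 hcon⟩ h
        rw [h1 s this.le]; ring
      · filter_upwards [eventually_not_mem_image (A j) (A (j + 1)) (A i) 0 1 (by
          intro s hs h
          have : A i ∈ segment ℝ (A j) (A (j + 1)) := by
            rw [segment_eq_image_lineMap]; exact ⟨s, hs, h.symm⟩
          rcases hv i j this with h' | h'
          · exact hji h'
          · exact hji' (by rw [h']; ring))] with y hy s hs h
        exact absurd h (hy s hs)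
    · push Not at hxv
      have hopen : ∀ j, ∀ s ∈ Set.Icc (0:ℝ) 1, x = AffineMap.lineMap (A j) (A (j + 1)) s →
          x ∈ openSegment ℝ (A j) (A (j + 1)) := by
        intro j s hs h
        rw [openSegment_eq_image_lineMap]
        refine ⟨s, ⟨lt_of_le_of_ne hs.1 ?_, lt_of_le_of_ne hs.2 ?_⟩, h.symm⟩
        · rintro rfl
          exact hxv j (by simpa using h)
        · rintro rfl
          exact hxv (j + 1) (by simpa using h)
      by_cases hxk : ∃ k, ∃ s ∈ Set.Icc (0:ℝ) 1, x = AffineMap.lineMap (A k) (A (k + 1)) s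
      · obtain ⟨k, s₀, hs₀, hk⟩ := hxk
        refine ⟨fun y => α k + (α (k + 1) - α k) *
          φ (⟪A (k + 1) - A k, y - A k⟫ / ‖A (k + 1) - A k‖ ^ 2), ?_, fun j => ?_⟩
        · have : ContDiff ℝ (⊤ : ℕ∞) (fun y : EuclideanSpace ℝ (Fin N) =>
              ⟪A (k + 1) - A k, y - A k⟫ / ‖A (k + 1) - A k‖ ^ 2) := by
            apply ContDiff.div_const
            exact contDiff_const.inner ℝ (contDiff_id.sub contDiff_const)
          exact contDiff_const.add (contDiff_const.mul (hφ.comp this))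
        · by_cases hjk : j = k
          · subst hjk
            refine Filter.Eventually.of_forall fun y s hs h => ?_
            have hl : ‖A (j + 1) - A j‖ ≠ 0 := norm_ne_zero_iff.2 (sub_ne_zero.2 (hne j))
            have : ⟪A (j + 1) - A j, y - A j⟫ / ‖A (j + 1) - A j‖ ^ 2 = s := by
              rw [h, AffineMap.lineMap_apply_module', add_sub_cancel_right, inner_smul_right,
                real_inner_self_eq_norm_sq]
              field_simp
            simp only [this]
          · filter_upwards [eventually_not_mem_image (A j) (A (j + 1)) x 0 1 (by
              intro s hs h
              have : x ∈ openSegment ℝ (A j) (A (j + 1)) ∩ openSegment ℝ (A k) (A (k + 1)) :=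
                ⟨hopen j s hs h, hopen k s₀ hs₀ hk⟩
              rw [hop j k hjk] at this
              exact this)] with y hy s hs h
            exact absurd h (hy s hs)
      · push Not at hxk
        refine ⟨fun _ => 0, contDiff_const, fun j => ?_⟩
        filter_upwards [eventually_not_mem_image (A j) (A (j + 1)) x 0 1 (hxk j)] with y hy s hs h
        exact absurd h (hy s hs)
  obtain ⟨g, hg⟩ := key
  exact ⟨g, g.contMDiff.contDiff, fun j s hs => hg _ j s hs rfl⟩

lemma side_energy_le {N n : ℕ} [NeZero n] (A : ZMod n → EuclideanSpace ℝ (Fin N))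
    (i : ZMod n) (hi : A (i + 1) ≠ A i)
    (u : EuclideanSpace ℝ (Fin N) → ℝ) (hu : ContDiff ℝ (⊤ : ℕ∞) u) (a b ε : ℝ) (φ : ℝ → ℝ)
    (hφ : ContDiff ℝ (⊤ : ℕ∞) φ)
    (h : ∀ s ∈ Set.Icc (0:ℝ) 1, u (AffineMap.lineMap (A i) (A (i + 1)) s) = a + b * φ s)
    (hε : ∫ s in (0:ℝ)..1, (deriv φ s) ^ 2 ≤ 1 + ε) :
    ∫ x in segment ℝ (A i) (A (i + 1)),
          ‖(fderiv ℝ u x (polyTau A i)) • polyTau A i‖ ^ 2 ∂(μH[1]) ≤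
      (1 + ε) * (b ^ 2 / polyLen A i) := by
  rw [side_energy A i hi u hu]
  have : ∫ s in (0:ℝ)..1, (deriv (fun s : ℝ => u (AffineMap.lineMap (A i) (A (i + 1)) s)) s) ^ 2 =
      ∫ s in (0:ℝ)..1, b ^ 2 * (deriv φ s) ^ 2 := by
    rw [intervalIntegral.integral_of_le zero_le_one, intervalIntegral.integral_of_le zero_le_one,
      integral_Ioc_eq_integral_Ioo, integral_Ioc_eq_integral_Ioo]
    apply setIntegral_congr_fun measurableSet_Ioo
    intro s hs
    have he : (fun s => u (AffineMap.lineMap (A i) (A (i + 1)) s)) =ᶠ[nhds s]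
        fun s => a + b * φ s := by
      filter_upwards [Icc_mem_nhds hs.1 hs.2] with t ht using h t ht
    have hd : deriv (fun s => a + b * φ s) s = b * deriv φ s := by
      rw [deriv_const_add, deriv_const_mul _ ((hφ.differentiable (by simp)) s)]
    simp only [he.deriv_eq, hd]
    ring
  rw [this, intervalIntegral.integral_const_mul, ← mul_div_assoc]
  apply div_le_div_of_nonneg_right _ (norm_nonneg _)
  nlinarith [sq_nonneg b]

/-- The energy of `α`. -/
def ringEnergy {N n : ℕ} [NeZero n] (A : ZMod n → EuclideanSpace ℝ (Fin N)) (α : ZMod n → ℝ) : ℝ :=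
  ∑ i, (α (i + 1) - α i) ^ 2 / polyLen A i

lemma sum_sq_pos {n : ℕ} [NeZero n] {α : ZMod n → ℝ} (h : α ≠ 0) : 0 < ∑ i, α i ^ 2 := by
  obtain ⟨i, hi⟩ := Function.ne_iff.1 h
  exact Finset.sum_pos' (fun _ _ => sq_nonneg _) ⟨i, Finset.mem_univ _, sq_pos_of_ne_zero hi⟩

lemma exists_minimizer {N n : ℕ} [NeZero n] (hn : 3 ≤ n)
    (A : ZMod n → EuclideanSpace ℝ (Fin N)) :
    ∃ α₀ : ZMod n → ℝ, α₀ ≠ 0 ∧ ∑ i, α₀ i = 0 ∧ ∀ α : ZMod n → ℝ, α ≠ 0 → ∑ i, α i = 0 →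
      ringEnergy A α₀ / ∑ i, α₀ i ^ 2 ≤ ringEnergy A α / ∑ i, α i ^ 2 := by
  have hscale : ∀ (α : ZMod n → ℝ) (c : ℝ), ringEnergy A (c • α) = c ^ 2 * ringEnergy A α := by
    intro α c
    simp only [ringEnergy, Finset.mul_sum, Pi.smul_apply, smul_eq_mul]
    exact Finset.sum_congr rfl fun i _ => by ring
  have hscale2 : ∀ (α : ZMod n → ℝ) (c : ℝ), ∑ i, (c • α) i ^ 2 = c ^ 2 * ∑ i, α i ^ 2 := by
    intro α c
    simp only [Finset.mul_sum, Pi.smul_apply, smul_eq_mul]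
    exact Finset.sum_congr rfl fun i _ => by ring
  let S : Set (ZMod n → ℝ) := {α | ∑ i, α i = 0 ∧ ∑ i, α i ^ 2 = 1}
  have hmem : ∀ α : ZMod n → ℝ, α ≠ 0 → ∑ i, α i = 0 →
      (Real.sqrt (∑ i, α i ^ 2))⁻¹ • α ∈ S := by
    intro α h hs
    refine ⟨?_, ?_⟩
    · simp only [Pi.smul_apply, smul_eq_mul, ← Finset.mul_sum, hs, mul_zero]
    · have := sum_sq_pos h
      rw [hscale2, inv_pow, Real.sq_sqrt this.le, inv_mul_cancel₀ this.ne']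
  have hSne : S.Nonempty := by
    haveI : Fact (1 < n) := ⟨by omega⟩
    let α : ZMod n → ℝ := Pi.single 0 1 - Pi.single 1 1
    refine ⟨_, hmem α ?_ ?_⟩
    · intro h
      have := congrFun h 0
      simp [α] at this
    · simp [α, Finset.sum_sub_distrib]
  have hSc : IsCompact S := by
    refine Metric.isCompact_of_isClosed_isBounded ?_ ?_
    · exact (isClosed_eq (by fun_prop) continuous_const).inter
        (isClosed_eq (by fun_prop) continuous_const)
    · refine (Metric.isBounded_closedBall (x := (0 : ZMod n → ℝ)) (r := 1)).subset ?_
      intro α hα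
      rw [mem_closedBall_zero_iff, pi_norm_le_iff_of_nonneg zero_le_one]
      intro i
      rw [Real.norm_eq_abs, ← sq_le_one_iff_abs_le_one, ← hα.2]
      exact Finset.single_le_sum (f := fun i => α i ^ 2) (fun _ _ => sq_nonneg _)
        (Finset.mem_univ i)
  have hcont : Continuous (ringEnergy A) := by
    unfold ringEnergy
    simp only [div_eq_mul_inv]
    fun_prop
  obtain ⟨α₀, hα₀, hmin⟩ := hSc.exists_isMinOn hSne hcont.continuousOn
  refine ⟨α₀, ?_, hα₀.1, ?_⟩
  · rintro rfl
    have := hα₀.2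
    simp at this
  · intro α h hs
    have hp := sum_sq_pos h
    have := hmin (hmem α h hs)
    simp only [Set.mem_setOf_eq] at this
    rw [hscale, inv_pow, Real.sq_sqrt hp.le] at this
    rw [hα₀.2, div_one]
    rwa [div_eq_inv_mul]

/-- **`λ₁ᴬ` as a finite-dimensional eigenvalue**: `λ₁ᴬ` is the minimum of
`Q(α, β) / ∑ᵢ αᵢ²` over nonzero `(α, β) ∈ E` (i.e. `αᵢ + βᵢ = αᵢ₊₁` cyclically) with
`∑ᵢ αᵢ = 0`, where `Q(α, β) = ∑ᵢ βᵢ²/ℓᵢ`. -/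
theorem polyLambda1_eq_min_quadratic_form {N n : ℕ} [NeZero n]
    (A : ZMod n → EuclideanSpace ℝ (Fin N)) (hA : IsPolygon A) :
    IsLeast
      { r : ℝ | ∃ α β : ZMod n → ℝ,
          (∀ i, α i + β i = α (i + 1)) ∧ (α ≠ 0 ∨ β ≠ 0) ∧ (∑ i, α i) = 0 ∧
          r = (∑ i, β i ^ 2 / polyLen A i) / (∑ i, α i ^ 2) }
      (polyLambda1 A) := by
  obtain ⟨α₀, hα₀, hs₀, hmin⟩ := exists_minimizer hA.1 A
  have hne := hA.2.1
  have hl : ∀ i, 0 ≤ polyLen A i := fun i => norm_nonneg _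
  -- upper bound: every admissible `α` is approximated
  have happrox : ∀ ε > 0, ∃ u : EuclideanSpace ℝ (Fin N) → ℝ, ContDiff ℝ (⊤ : ℕ∞) u ∧
      (∀ i, u (A i) = α₀ i) ∧ (∑ i, ∫ x in segment ℝ (A i) (A (i + 1)),
          ‖(fderiv ℝ u x (polyTau A i)) • polyTau A i‖ ^ 2 ∂(μH[1])) ≤
          (1 + ε) * ringEnergy A α₀ := by
    intro ε hε
    obtain ⟨φ, δ, hφ, hδ, hδ1, h0, h1, hint⟩ := exists_cutoff ε hε
    obtain ⟨u, hu, hus⟩ := exists_extension hA α₀ φ δ hφ hδ hδ1 h0 h1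
    refine ⟨u, hu, fun i => ?_, ?_⟩
    · have := hus i 0 (by simp)
      simpa [h0 0 hδ.le] using this
    · rw [ringEnergy, Finset.mul_sum]
      exact Finset.sum_le_sum fun i _ => side_energy_le A i (hne i) u hu _ _ ε φ hφ (hus i) hint
  have hp := sum_sq_pos hα₀
  have hlow : ∀ u : EuclideanSpace ℝ (Fin N) → ℝ, ContDiff ℝ (⊤ : ℕ∞) u →
      (∑ i, u (A i)) = 0 → (∑ i, u (A i) ^ 2) ≠ 0 →
      ringEnergy A α₀ / ∑ i, α₀ i ^ 2 ≤ (∑ i, ∫ x in segment ℝ (A i) (A (i + 1)),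
          ‖(fderiv ℝ u x (polyTau A i)) • polyTau A i‖ ^ 2 ∂(μH[1])) /
        (∑ i, u (A i) ^ 2) := by
    intro u hu hs hs2
    have h0 : (fun i => u (A i)) ≠ 0 := by
      intro h
      apply hs2
      exact Finset.sum_eq_zero fun i _ => by
        have : u (A i) = 0 := congrFun h i
        simp [this]
    refine (hmin (fun i => u (A i)) h0 hs).trans ?_
    apply div_le_div_of_nonneg_right _ (Finset.sum_nonneg fun _ _ => sq_nonneg _)
    exact Finset.sum_le_sum fun i _ => side_energy_ge A i (hne i) u hu
  have hE : 0 ≤ ringEnergy A α₀ :=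
    Finset.sum_nonneg fun i _ => div_nonneg (sq_nonneg _) (hl i)
  have hlam : polyLambda1 A = ringEnergy A α₀ / ∑ i, α₀ i ^ 2 := by
    apply le_antisymm
    · apply le_of_forall_pos_le_add
      intro ε hε
      set m := ringEnergy A α₀ / ∑ i, α₀ i ^ 2 with hm
      have hm0 : 0 ≤ m := div_nonneg hE hp.le
      obtain ⟨u, hu, huA, hen⟩ := happrox (ε / (m + 1)) (by positivity)
      have hbdd : BddBelow { r : ℝ | ∃ u : EuclideanSpace ℝ (Fin N) → ℝ, ContDiff ℝ (⊤ : ℕ∞) u ∧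
          (∑ i, u (A i)) = 0 ∧ (∑ i, u (A i) ^ 2) ≠ 0 ∧
          r = (∑ i, ∫ x in segment ℝ (A i) (A (i + 1)),
            ‖(fderiv ℝ u x (polyTau A i)) • polyTau A i‖ ^ 2 ∂(μH[1])) /
            (∑ i, u (A i) ^ 2) } := by
        refine ⟨m, ?_⟩
        rintro r ⟨u, hu, h1, h2, rfl⟩
        exact hlow u hu h1 h2
      refine (csInf_le hbdd ⟨u, hu, by simpa only [huA] using hs₀,
        by simpa only [huA] using hp.ne', rfl⟩).trans ?_
      simp only [huA]
      calc _ ≤ ((1 + ε / (m + 1)) * ringEnergy A α₀) / ∑ i, α₀ i ^ 2 :=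
            div_le_div_of_nonneg_right hen hp.le
        _ = m + ε * (m / (m + 1)) := by rw [mul_div_assoc, ← hm]; ring
        _ ≤ m + ε := by
            have : m / (m + 1) ≤ 1 := (div_le_one (by positivity)).2 (by linarith)
            nlinarith
    · apply le_csInf
      · obtain ⟨u, hu, huA, hen⟩ := happrox 1 one_pos
        exact ⟨_, u, hu, by simpa only [huA] using hs₀,
          by simpa only [huA] using hp.ne', rfl⟩
      · rintro r ⟨u, hu, h1, h2, rfl⟩
        exact hlow u hu h1 h2
  rw [hlam]
  refine ⟨⟨α₀, fun i => α₀ (i + 1) - α₀ i, fun i => by ring, Or.inl hα₀, hs₀, rfl⟩, ?_⟩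
  rintro r ⟨α, β, hαβ, hnz, hs, rfl⟩
  have hβ : β = fun i => α (i + 1) - α i := funext fun i => by linarith [hαβ i]
  subst hβ
  refine hmin α ?_ hs
  rintro rfl
  rcases hnz with h | h
  · exact h rfl
  · exact h (by ext i; simp)
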